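/- arXiv:2206.00215 — 4 statements merged into one kernel-verified Lean document; each statement's English description precedes it below -/
import Mathlib

section
/- For every n : ℕ and all a b : Fin n → Fin 4, the trace of P_a * P_b equals 2^n if a = b and equals 0 otherwise. -/
open Matrix Complex Kronecker

noncomputable def pauli : Fin 4 → Matrix (Fin 2) (Fin 2) ℂ
  | 0 => !![1, 0; 0, 1]
  | 1 => !![0, 1; 1, 0]
  | 2 => !![0, -Complex.I; Complex.I, 0]
  | 3 => !![1, 0; 0, -1]

noncomputable def PauliString {n : ℕ} (a : Fin n → Fin 4) :
    Matrix (Fin n → Fin 2) (Fin n → Fin 2) ℂ :=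
  Matrix.of fun f g => ∏ i, pauli (a i) (f i) (g i)

section PiKronecker

variable {ι R : Type*} [Fintype ι] [CommSemiring R] {l m n : ι → Type*}

/-- The Kronecker product `⨂ i, A i` of a finite family of matrices, with rows and columns indexed
by dependent functions, so that no order on `ι` is needed. -/
def piKronecker (A : ∀ i, Matrix (m i) (n i) R) : Matrix (∀ i, m i) (∀ i, n i) R :=
  Matrix.of fun f g => ∏ i, A i (f i) (g i)

theorem piKronecker_mul_piKronecker [DecidableEq ι] [∀ i, Fintype (m i)]
    (A : ∀ i, Matrix (l i) (m i) R) (B : ∀ i, Matrix (m i) (n i) R) :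
    piKronecker A * piKronecker B = piKronecker fun i => A i * B i := by
  ext f g
  simp only [piKronecker, Matrix.mul_apply, Matrix.of_apply, ← Finset.prod_mul_distrib,
    Fintype.prod_sum]

theorem trace_piKronecker [DecidableEq ι] [∀ i, Fintype (m i)] (A : ∀ i, Matrix (m i) (m i) R) :
    Matrix.trace (piKronecker A) = ∏ i, Matrix.trace (A i) := by
  simp only [piKronecker, Matrix.trace, Matrix.diag_apply, Matrix.of_apply, Fintype.prod_sum]

theorem trace_piKronecker_mul_of_biorthogonal [DecidableEq ι] [∀ i, Fintype (m i)]
    [∀ i, Fintype (n i)] {κ : ι → Type*} [∀ i, DecidableEq (κ i)]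
    {σ : ∀ i, κ i → Matrix (m i) (n i) R} {τ : ∀ i, κ i → Matrix (n i) (m i) R}
    {c : ∀ i, κ i → R}
    (h : ∀ i x y, Matrix.trace (σ i x * τ i y) = if x = y then c i x else 0) (a b : ∀ i, κ i) :
    Matrix.trace (piKronecker (fun i => σ i (a i)) * piKronecker (fun i => τ i (b i))) =
      if a = b then ∏ i, c i (a i) else 0 := by
  calc
    _ = ∏ i, Matrix.trace (σ i (a i) * τ i (b i)) := by
      rw [piKronecker_mul_piKronecker, trace_piKronecker]
    _ = ∏ i, if a i = b i then c i (a i) else 0 := by simp only [h]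
    _ = if a = b then ∏ i, c i (a i) else 0 := by
      simp only [Finset.prod_ite_zero, Finset.mem_univ, true_imp_iff, funext_iff]

end PiKronecker

theorem trace_pauli_mul_pauli (x y : Fin 4) :
    Matrix.trace (pauli x * pauli y) = if x = y then 2 else 0 := by
  fin_cases x <;> fin_cases y <;> simp [pauli, Matrix.trace_fin_two, one_add_one_eq_two]

theorem pauliString_eq_piKronecker {n : ℕ} (a : Fin n → Fin 4) :
    PauliString a = piKronecker fun i => pauli (a i) :=
  rfl

theorem pauli_string_trace_orthogonality_general {ι : Type*} [Fintype ι] [DecidableEq ι]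
    (a b : ι → Fin 4) :
    Matrix.trace (piKronecker (fun i => pauli (a i)) * piKronecker (fun i => pauli (b i))) =
      if a = b then (2 : ℂ) ^ Fintype.card ι else 0 := by
  rw [trace_piKronecker_mul_of_biorthogonal fun _ => trace_pauli_mul_pauli, Finset.prod_const,
    Finset.card_univ]

theorem pauli_string_trace_orthogonality (n : ℕ) (a b : Fin n → Fin 4) :
    Matrix.trace (PauliString a * PauliString b) =
      if a = b then (2 : ℂ) ^ n else 0 := by
  rw [pauliString_eq_piKronecker, pauliString_eq_piKronecker,
    pauli_string_trace_orthogonality_general, Fintype.card_fin]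
end

section
/- Let d : ℕ, let U, C₁, C₂ be elements of the unitary group of d×d complex matrices with C₂ * U * C₁ = U, and let E be any d×d complex matrix. Define the controlled gates ctrl(W) = !![1,0;0,0] ⊗ₖ 1 + !![0,0;0,1] ⊗ₖ W (Kronecker product of a 2×2 matrix with a d×d matrix) and the plus-state projector Π₊ = !![1/2,1/2;1/2,1/2] ⊗ₖ 1. Then Π₊ * ctrl(C₂) * (1₂ ⊗ₖ (E * U)) * ctrl(C₁) * Π₊ = !![1/2,1/2;1/2,1/2] ⊗ₖ (((E + C₂ * E * C₂ᴴ)/2) * U). That is, one layer of Pauli check sandwiching with ancilla prepared and postselected in the |+⟩ state transforms the Kraus operator E of noise acting after U into E' = (E + C₂ E C₂†)/2. -/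
open Matrix Complex Kronecker

noncomputable def ctrl {d : ℕ} (W : Matrix (Fin d) (Fin d) ℂ) :
    Matrix (Fin 2 × Fin d) (Fin 2 × Fin d) ℂ :=
  (!![1, 0; 0, 0] : Matrix (Fin 2) (Fin 2) ℂ) ⊗ₖ (1 : Matrix (Fin d) (Fin d) ℂ) +
    (!![0, 0; 0, 1] : Matrix (Fin 2) (Fin 2) ℂ) ⊗ₖ W

noncomputable def plusProj (d : ℕ) : Matrix (Fin 2 × Fin d) (Fin 2 × Fin d) ℂ :=
  (!![1/2, 1/2; 1/2, 1/2] : Matrix (Fin 2) (Fin 2) ℂ) ⊗ₖ (1 : Matrix (Fin d) (Fin d) ℂ)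

/-! Both controlled gates are block diagonal in the computational basis of the ancilla, so together
they turn `1 ⊗ₖ A` into `|0⟩⟨0| ⊗ₖ A + |1⟩⟨1| ⊗ₖ (C₂ * A * C₁)`. As `|⟨+|0⟩|² = |⟨+|1⟩|² = 1/2`,
projecting the ancilla onto `|+⟩` on both sides averages the two branches. For `A = E * U` the check
relation, in the form `U * C₁ = C₂⁻¹ * U`, turns the second branch into `C₂ * E * C₂⁻¹ * U`. -/

section KroneckerSandwich

variable {R p q : Type*} [CommSemiring R] [Fintype p] [DecidableEq p] [Fintype q] [DecidableEq q]

theorem kronecker_one_mul_kronecker_mul_kronecker_one {k l m n : Type*} [Fintype l] [Fintype m]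
    (P : Matrix k l R) (X : Matrix l m R) (Q : Matrix m n R) (A : Matrix p q R) :
    P ⊗ₖ (1 : Matrix p p R) * X ⊗ₖ A * Q ⊗ₖ (1 : Matrix q q R) = (P * X * Q) ⊗ₖ A := by
  simp only [← mul_kronecker_mul, Matrix.one_mul, Matrix.mul_one]

theorem add_kronecker_mul_one_kronecker_mul_add_kronecker {m : Type*} [Fintype m] [DecidableEq m]
    {P Q : Matrix m m R} (hP : IsIdempotentElem P) (hQ : IsIdempotentElem Q) (hPQ : P * Q = 0)
    (hQP : Q * P = 0) (V : Matrix p p R) (A : Matrix p q R) (W : Matrix q q R) :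
    (P ⊗ₖ (1 : Matrix p p R) + Q ⊗ₖ V) * (1 : Matrix m m R) ⊗ₖ A *
        (P ⊗ₖ (1 : Matrix q q R) + Q ⊗ₖ W) =
      P ⊗ₖ A + Q ⊗ₖ (V * A * W) := by
  simp only [Matrix.add_mul, Matrix.mul_add, ← mul_kronecker_mul, Matrix.one_mul, Matrix.mul_one,
    hP.eq, hQ.eq, hPQ, hQP, zero_kronecker, add_zero, zero_add]

end KroneckerSandwich

theorem vecMulVec_mul_mul_vecMulVec {R k l m n : Type*} [CommSemiring R] [Fintype l] [Fintype m]
    (u : k → R) (v : l → R) (X : Matrix l m R) (w : m → R) (z : n → R) :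
    vecMulVec u v * X * vecMulVec w z = (v ⬝ᵥ X *ᵥ w) • vecMulVec u z := by
  rw [Matrix.mul_assoc, mul_vecMulVec, vecMulVec_mul_vecMulVec, vecMulVec_smul]

section PlusState

variable {K : Type*} [Field K]

theorem plus_eq_vecMulVec :
    (!![1/2, 1/2; 1/2, 1/2] : Matrix (Fin 2) (Fin 2) K) = vecMulVec ![1/2, 1/2] ![1, 1] := by
  ext i j
  fin_cases i <;> fin_cases j <;> simp [vecMulVec_apply]

theorem plus_mul_diagonal_mul_plus (a b : K) :
    !![1/2, 1/2; 1/2, 1/2] * !![a, 0; 0, b] * !![1/2, 1/2; 1/2, 1/2] =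
      ((a + b) / 2) • (!![1/2, 1/2; 1/2, 1/2] : Matrix (Fin 2) (Fin 2) K) := by
  have expectation : ![1, 1] ⬝ᵥ !![a, 0; 0, b] *ᵥ ![1/2, 1/2] = (a + b) / 2 := by
    simp only [mulVec, dotProduct, Fin.sum_univ_two, of_apply, cons_val', cons_val_zero,
      cons_val_one, cons_val_fin_one]
    ring
  rw [plus_eq_vecMulVec, vecMulVec_mul_mul_vecMulVec, expectation]

end PlusState

section PauliCheckSandwich

variable {d : ℕ}

theorem ctrl_mul_one_kronecker_mul_ctrl (V A W : Matrix (Fin d) (Fin d) ℂ) :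
    ctrl V * (1 : Matrix (Fin 2) (Fin 2) ℂ) ⊗ₖ A * ctrl W =
      !![1, 0; 0, 0] ⊗ₖ A + !![0, 0; 0, 1] ⊗ₖ (V * A * W) := by
  apply add_kronecker_mul_one_kronecker_mul_add_kronecker <;>
    ext i j <;> fin_cases i <;> fin_cases j <;> simp

theorem plusProj_mul_ctrl_mul_ctrl_mul_plusProj (V A W : Matrix (Fin d) (Fin d) ℂ) :
    plusProj d * ctrl V * (1 : Matrix (Fin 2) (Fin 2) ℂ) ⊗ₖ A * ctrl W * plusProj d =
      !![1/2, 1/2; 1/2, 1/2] ⊗ₖ (((1 : ℂ) / 2) • (A + V * A * W)) := by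
  calc
    _ = plusProj d * (ctrl V * (1 : Matrix (Fin 2) (Fin 2) ℂ) ⊗ₖ A * ctrl W) * plusProj d := by
      simp only [Matrix.mul_assoc]
    _ = (!![1/2, 1/2; 1/2, 1/2] * !![1, 0; 0, 0] * !![1/2, 1/2; 1/2, 1/2]) ⊗ₖ A +
        (!![1/2, 1/2; 1/2, 1/2] * !![0, 0; 0, 1] * !![1/2, 1/2; 1/2, 1/2]) ⊗ₖ (V * A * W) := by
      simp only [ctrl_mul_one_kronecker_mul_ctrl, Matrix.mul_add, Matrix.add_mul, plusProj,
        kronecker_one_mul_kronecker_mul_kronecker_one]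
    _ = !![1/2, 1/2; 1/2, 1/2] ⊗ₖ (((1 : ℂ) / 2) • (A + V * A * W)) := by
      simp only [plus_mul_diagonal_mul_plus, add_zero, zero_add, smul_kronecker, kronecker_smul,
        kronecker_add, smul_add]

theorem single_layer_pcs_transforms_kraus_general (U C₁ : Matrix (Fin d) (Fin d) ℂ)
    (C₂ : GL (Fin d) ℂ) (hcheck : C₂.val * U * C₁ = U) (E : Matrix (Fin d) (Fin d) ℂ) :
    plusProj d * ctrl C₂.val * (1 : Matrix (Fin 2) (Fin 2) ℂ) ⊗ₖ (E * U) * ctrl C₁ * plusProj d =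
      !![1/2, 1/2; 1/2, 1/2] ⊗ₖ ((((1 : ℂ) / 2) • (E + C₂.val * E * C₂⁻¹.val)) * U) := by
  have check_inv : U * C₁ = C₂⁻¹.val * U := by
    rw [Units.eq_inv_mul_iff_mul_eq, ← Matrix.mul_assoc, hcheck]
  have branch_one : C₂.val * (E * U) * C₁ = C₂.val * E * C₂⁻¹.val * U := by
    simp only [Matrix.mul_assoc, check_inv]
  rw [plusProj_mul_ctrl_mul_ctrl_mul_plusProj, branch_one, Matrix.smul_mul, Matrix.add_mul]

end PauliCheckSandwich

theorem single_layer_pcs_transforms_kraus (d : ℕ)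
    (U C₁ C₂ : Matrix.unitaryGroup (Fin d) ℂ)
    (hcheck : (C₂ : Matrix (Fin d) (Fin d) ℂ) * U * C₁ = U)
    (E : Matrix (Fin d) (Fin d) ℂ) :
    plusProj d * ctrl (C₂ : Matrix (Fin d) (Fin d) ℂ) *
        ((1 : Matrix (Fin 2) (Fin 2) ℂ) ⊗ₖ (E * (U : Matrix (Fin d) (Fin d) ℂ))) *
        ctrl (C₁ : Matrix (Fin d) (Fin d) ℂ) * plusProj d =
      (!![1/2, 1/2; 1/2, 1/2] : Matrix (Fin 2) (Fin 2) ℂ) ⊗ₖ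
        ((((1 : ℂ) / 2) •
            (E + (C₂ : Matrix (Fin d) (Fin d) ℂ) * E * (C₂ : Matrix (Fin d) (Fin d) ℂ)ᴴ)) *
          (U : Matrix (Fin d) (Fin d) ℂ)) :=
  single_layer_pcs_transforms_kraus_general U.1 C₁.1 (Unitary.toUnits C₂) hcheck E
end

section
/- (Unit Fidelity, channel form of Theorem 1.) Let n : ℕ, let l : List (Fin n → Fin 4) be a duplicate-free list containing every a : Fin n → Fin 4, let ι be a finite index type, and let (E_i)_{i : ι} be a family of complex matrices indexed by (Fin n → Fin 2). Write E'_i = l.foldl (fun M a => (P_a * M * P_a + M)/2) E_i for the Kraus operators after applying all 4^n layers of checks. Then for every matrix ρ indexed by (Fin n → Fin 2), ∑_{i} E'_i * ρ * (E'_i)ᴴ = ((∑_{i} Complex.normSq (trace E_i))/4^n) • ρ. In particular the postselected output of the mitigated circuit is proportional to the noiseless state, so the postselected state equals the noiseless state whenever the postselection probability is nonzero. -/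
open Matrix Complex Kronecker

/-!
Pauli strings pairwise commute or anticommute. Hence, in the expansion of a Kraus operator `E` in
Pauli strings, a layer of checks with `P_a` keeps the terms commuting with `P_a` and kills those
anticommuting with it. Every nonidentity string anticommutes with some `P_a`, so after all layers
only the identity term `(tr E / 2 ^ n) • 1` is left.
-/

section CheckLayers

variable (R : Type*) {A : Type*} [Field R] [Ring A] [Algebra R A]

/-- One layer of checks with `u` followed by postselection, as a linear map `x ↦ (u x u + x) / 2`
on operators, for an arbitrary algebra in place of matrices. -/
noncomputable def checkLayer (u : A) : A →ₗ[R] A :=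
  (1 / 2 : R) • (LinearMap.mulLeftRight R (u, u) + LinearMap.id)

/-- The layers of checks with the elements of a list, the head of the list being applied first. -/
noncomputable def checkLayers : List A → A →ₗ[R] A
  | [] => LinearMap.id
  | u :: us => checkLayers us ∘ₗ checkLayer R u

theorem checkLayer_apply (u x : A) : checkLayer R u x = (1 / 2 : R) • (u * x * u + x) := rfl

theorem checkLayers_cons (u : A) (us : List A) (x : A) :
    checkLayers R (u :: us) x = checkLayers R us (checkLayer R u x) := rfl

theorem checkLayers_eq_foldl (us : List A) (x : A) :
    checkLayers R us x = us.foldl (fun y u => (1 / 2 : R) • (u * y * u + y)) x := by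
  induction us generalizing x with
  | nil => rfl
  | cons u us ih => rw [checkLayers_cons, ih, List.foldl_cons, checkLayer_apply]

variable {R} {u x : A} {us : List A}

theorem checkLayer_eq_self_of_commute [NeZero (2 : R)] (hu : u * u = 1) (h : Commute u x) :
    checkLayer R u x = x := by
  rw [checkLayer_apply, h.eq, mul_assoc, hu, mul_one, ← two_smul R x, smul_smul,
    one_div_mul_cancel two_ne_zero, one_smul]

theorem checkLayer_eq_zero_of_anticommute (hu : u * u = 1) (h : u * x = -(x * u)) :
    checkLayer R u x = 0 := by
  rw [checkLayer_apply, h, neg_mul, mul_assoc, hu, mul_one, neg_add_cancel, smul_zero]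

theorem checkLayers_eq_self_of_commute [NeZero (2 : R)] (hus : ∀ u ∈ us, u * u = 1)
    (hcomm : ∀ u ∈ us, Commute u x) : checkLayers R us x = x := by
  induction us with
  | nil => rfl
  | cons u us ih =>
    rw [List.forall_mem_cons] at hus hcomm
    rw [checkLayers_cons, checkLayer_eq_self_of_commute hus.1 hcomm.1, ih hus.2 hcomm.2]

theorem checkLayers_eq_zero_of_anticommute [NeZero (2 : R)] (hus : ∀ u ∈ us, u * u = 1)
    (hcomm : ∀ u ∈ us, Commute u x ∨ u * x = -(x * u)) (hanti : ∃ u ∈ us, u * x = -(x * u)) :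
    checkLayers R us x = 0 := by
  induction us with
  | nil => simp at hanti
  | cons u us ih =>
    rw [List.forall_mem_cons] at hus hcomm
    by_cases hu : u * x = -(x * u)
    · rw [checkLayers_cons, checkLayer_eq_zero_of_anticommute hus.1 hu, map_zero]
    · have hux : Commute u x := hcomm.1.resolve_right hu
      have hanti' : ∃ v ∈ us, v * x = -(x * v) := by simpa [hu] using hanti
      rw [checkLayers_cons, checkLayer_eq_self_of_commute hus.1 hux, ih hus.2 hcomm.2 hanti']

end CheckLayers

section Pauli

/-- The sign by which `pauli a` and `pauli b` commute: `1` if they commute, `-1` if they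
anticommute. -/
def pauliSign (a b : Fin 4) : ℤˣ :=
  if a = 0 ∨ b = 0 ∨ a = b then 1 else -1

theorem pauli_mul_self (a : Fin 4) : pauli a * pauli a = 1 := by
  fin_cases a <;> simp [pauli, one_fin_two]

theorem pauli_mul_comm (a b : Fin 4) :
    pauli a * pauli b = pauliSign a b • (pauli b * pauli a) := by
  fin_cases a <;> fin_cases b <;> simp [pauli, pauliSign]

theorem pauliSign_zero_left (b : Fin 4) : pauliSign 0 b = 1 := by
  simp [pauliSign]

theorem exists_pauliSign_eq_neg_one {b : Fin 4} (hb : b ≠ 0) : ∃ a, pauliSign a b = -1 := by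
  revert b
  decide

theorem sum_pauli_mul_pauli_apply (i j k l : Fin 2) :
    ∑ a, pauli a i j * pauli a k l = if i = l ∧ j = k then 2 else 0 := by
  fin_cases i <;> fin_cases j <;> fin_cases k <;> fin_cases l <;>
    norm_num [pauli, Fin.sum_univ_four]

end Pauli

section PauliString

variable {n : ℕ}

theorem pauliString_apply (a : Fin n → Fin 4) (f g : Fin n → Fin 2) :
    PauliString a f g = ∏ i, pauli (a i) (f i) (g i) := rfl

theorem pauliString_zero : PauliString (0 : Fin n → Fin 4) = 1 := by
  ext f g
  have hpauli : pauli 0 = 1 := one_fin_two.symm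
  simp only [pauliString_apply, Pi.zero_apply, hpauli, one_apply, Fintype.prod_ite_zero,
    Finset.prod_const_one, funext_iff]

theorem pauliString_mul_apply (a b : Fin n → Fin 4) (f g : Fin n → Fin 2) :
    (PauliString a * PauliString b) f g = ∏ i, (pauli (a i) * pauli (b i)) (f i) (g i) := by
  simp only [mul_apply, pauliString_apply, ← Finset.prod_mul_distrib, Fintype.prod_sum]

theorem pauliString_mul_self (a : Fin n → Fin 4) : PauliString a * PauliString a = 1 := by
  ext f g
  simp only [pauliString_mul_apply, pauli_mul_self, one_apply, Fintype.prod_ite_zero,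
    Finset.prod_const_one, funext_iff]

theorem pauliString_mul_comm (a b : Fin n → Fin 4) :
    PauliString a * PauliString b =
      (∏ i, pauliSign (a i) (b i)) • (PauliString b * PauliString a) := by
  ext f g
  simp only [Matrix.smul_apply, pauliString_mul_apply, pauli_mul_comm (a _) (b _),
    Finset.prod_smul]

theorem pauliString_commute_or_anticommute (a b : Fin n → Fin 4) :
    Commute (PauliString a) (PauliString b) ∨
      PauliString a * PauliString b = -(PauliString b * PauliString a) := by
  have hcomm := pauliString_mul_comm a b
  rcases Int.units_eq_one_or (∏ i, pauliSign (a i) (b i)) with hsign | hsign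
  · exact .inl (by rwa [hsign, one_smul] at hcomm)
  · exact .inr (by rwa [hsign, Units.neg_smul, one_smul] at hcomm)

theorem exists_pauliString_anticommute {b : Fin n → Fin 4} (hb : b ≠ 0) :
    ∃ a, PauliString a * PauliString b = -(PauliString b * PauliString a) := by
  obtain ⟨i, hi⟩ := Function.ne_iff.mp hb
  obtain ⟨c, hc⟩ := exists_pauliSign_eq_neg_one hi
  have hsign : ∏ j, pauliSign ((Pi.single i c : Fin n → Fin 4) j) (b j) = -1 := by
    rw [Fintype.prod_eq_single i fun j hj => by
      rw [Pi.single_eq_of_ne hj, pauliSign_zero_left], Pi.single_eq_same, hc]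
  exact ⟨Pi.single i c, by rw [pauliString_mul_comm, hsign, Units.neg_smul, one_smul]⟩

theorem sum_pauliString_mul_pauliString_apply (f g h k : Fin n → Fin 2) :
    ∑ a, PauliString a f g * PauliString a h k = if f = k ∧ g = h then 2 ^ n else 0 := by
  simp only [pauliString_apply, ← Finset.prod_mul_distrib]
  rw [← Fintype.prod_sum fun i c => pauli c (f i) (g i) * pauli c (h i) (k i)]
  simp only [sum_pauli_mul_pauli_apply, Fintype.prod_ite_zero, Finset.prod_const,
    Finset.card_univ, Fintype.card_fin, forall_and, funext_iff]

theorem sum_trace_pauliString_mul_smul (M : Matrix (Fin n → Fin 2) (Fin n → Fin 2) ℂ) :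
    ∑ a, (PauliString a * M).trace • PauliString a = (2 : ℂ) ^ n • M := by
  ext f g
  calc (∑ a, (PauliString a * M).trace • PauliString a) f g
      = ∑ a, ∑ h, ∑ k, PauliString a f g * PauliString a h k * M k h := by
        simp only [Matrix.sum_apply, Matrix.smul_apply, smul_eq_mul, trace, diag_apply, mul_apply,
          Finset.sum_mul]
        simp only [mul_comm, mul_left_comm]
    _ = ∑ h, ∑ k, (∑ a, PauliString a f g * PauliString a h k) * M k h := by
        simp only [Finset.sum_mul]
        rw [Finset.sum_comm]
        exact Finset.sum_congr rfl fun h _ => Finset.sum_comm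
    _ = ((2 : ℂ) ^ n • M) f g := by
        simp [sum_pauliString_mul_pauliString_apply, ite_and]

theorem checkLayers_pauliString_zero (l : List (Fin n → Fin 4)) :
    checkLayers ℂ (l.map PauliString) (PauliString 0) = PauliString (0 : Fin n → Fin 4) := by
  refine checkLayers_eq_self_of_commute ?_ ?_ <;> simp only [List.forall_mem_map]
  · exact fun a _ => pauliString_mul_self a
  · exact fun a _ => pauliString_zero ▸ Commute.one_right _

variable {l : List (Fin n → Fin 4)}

theorem checkLayers_pauliString_eq_zero {b : Fin n → Fin 4}
    (hb : ∃ a ∈ l, PauliString a * PauliString b = -(PauliString b * PauliString a)) :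
    checkLayers ℂ (l.map PauliString) (PauliString b) = 0 := by
  refine checkLayers_eq_zero_of_anticommute ?_ ?_ (by simpa using hb) <;>
    simp only [List.forall_mem_map]
  · exact fun a _ => pauliString_mul_self a
  · exact fun a _ => pauliString_commute_or_anticommute a b

theorem checkLayers_eq_trace_smul_one
    (hl : ∀ b ≠ 0, ∃ a ∈ l, PauliString a * PauliString b = -(PauliString b * PauliString a))
    (M : Matrix (Fin n → Fin 2) (Fin n → Fin 2) ℂ) :
    checkLayers ℂ (l.map PauliString) M = (M.trace / 2 ^ n) • 1 := by
  have hscaled : (2 : ℂ) ^ n • checkLayers ℂ (l.map PauliString) M = M.trace • 1 := by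
    rw [← map_smul, ← sum_trace_pauliString_mul_smul, map_sum,
      Fintype.sum_eq_single 0 fun b hb => by
        rw [map_smul, checkLayers_pauliString_eq_zero (hl b hb), smul_zero]]
    rw [map_smul, checkLayers_pauliString_zero, pauliString_zero, one_mul]
  rw [div_eq_inv_mul, mul_smul, ← hscaled, inv_smul_smul₀ (pow_ne_zero n two_ne_zero)]

end PauliString

theorem smul_one_mul_mul_conjTranspose_smul_one {m : Type*} [Fintype m] [DecidableEq m] (c : ℂ)
    (ρ : Matrix m m ℂ) : c • (1 : Matrix m m ℂ) * ρ * (c • (1 : Matrix m m ℂ))ᴴ =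
      (normSq c : ℂ) • ρ := by
  rw [conjTranspose_smul, conjTranspose_one, smul_mul_assoc, one_mul, mul_smul_comm, mul_one,
    smul_smul, star_def, normSq_eq_conj_mul_self]

/-- `hl` says that the checks detect every nontrivial Pauli error; the `2 * n` strings with a single
`X` or `Z` already do so. -/
theorem unit_fidelity_channel_form_general {n : ℕ} {l : List (Fin n → Fin 4)}
    (hl : ∀ b ≠ 0, ∃ a ∈ l, PauliString a * PauliString b = -(PauliString b * PauliString a))
    {ι : Type*} [Fintype ι] (E : ι → Matrix (Fin n → Fin 2) (Fin n → Fin 2) ℂ)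
    (ρ : Matrix (Fin n → Fin 2) (Fin n → Fin 2) ℂ) :
    (∑ i : ι,
        (l.foldl (fun M a => ((1 : ℂ) / 2) • (PauliString a * M * PauliString a + M)) (E i)) *
          ρ *
          (l.foldl (fun M a => ((1 : ℂ) / 2) • (PauliString a * M * PauliString a + M)) (E i))ᴴ) =
      (((∑ i : ι, (Complex.normSq (Matrix.trace (E i)) : ℂ)) / (4 : ℂ) ^ n)) • ρ := by
  rw [Finset.sum_div, Finset.sum_smul]
  refine Finset.sum_congr rfl fun i _ => ?_
  have hfold : l.foldl (fun M a => ((1 : ℂ) / 2) • (PauliString a * M * PauliString a + M)) (E i) =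
      ((E i).trace / 2 ^ n) • 1 := by
    rw [← checkLayers_eq_trace_smul_one hl, checkLayers_eq_foldl, List.foldl_map]
  have hnormSq : normSq ((E i).trace / 2 ^ n) = normSq (E i).trace / 4 ^ n := by
    rw [normSq_div, map_pow, normSq_ofNat]
    norm_num
  rw [hfold, smul_one_mul_mul_conjTranspose_smul_one, hnormSq, ofReal_div, ofReal_pow,
    ofReal_ofNat]

theorem unit_fidelity_channel_form (n : ℕ) (l : List (Fin n → Fin 4))
    (hnd : l.Nodup) (hmem : ∀ a : Fin n → Fin 4, a ∈ l)
    (ι : Type) [Fintype ι] (E : ι → Matrix (Fin n → Fin 2) (Fin n → Fin 2) ℂ)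
    (ρ : Matrix (Fin n → Fin 2) (Fin n → Fin 2) ℂ) :
    (∑ i : ι,
        (l.foldl (fun M a => ((1 : ℂ) / 2) • (PauliString a * M * PauliString a + M)) (E i)) *
          ρ *
          (l.foldl (fun M a => ((1 : ℂ) / 2) • (PauliString a * M * PauliString a + M)) (E i))ᴴ) =
      (((∑ i : ι, (Complex.normSq (Matrix.trace (E i)) : ℂ)) / (4 : ℂ) ^ n)) • ρ :=
  unit_fidelity_channel_form_general
    (fun _ hb => (exists_pauliString_anticommute hb).imp fun a ha => ⟨hmem a, ha⟩) E ρ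
end

section
/- (Single layer is insufficient.) For every C in the unitary group of 2×2 complex matrices, there exists a 2×2 complex matrix E in the unitary group such that E is not a scalar multiple of the identity matrix and (C * E * Cᴴ + E)/2 = E. Consequently, one layer of Pauli check sandwiching with check C cannot eliminate all weight-one errors, so at least two layers are necessary to detect all weight-one errors. -/
open Matrix

/-!
A check `C` acts trivially on an error `E` exactly when `E` commutes with `C`. If `C` is not
scalar, then `C` itself is such an error; if `C` is scalar, every non-scalar unitary is one, for
instance the bit flip `X`.
-/

theorem half_smul_add_eq_right_iff {𝕜 M : Type*} [DivisionRing 𝕜] [NeZero (2 : 𝕜)]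
    [AddCommGroup M] [Module 𝕜 M] {x y : M} :
    ((1 : 𝕜) / 2) • (x + y) = y ↔ x = y := by
  rw [one_div, inv_smul_eq_iff₀ two_ne_zero, two_smul, add_left_inj]

theorem half_smul_unitary_conj_add_eq_self_iff_commute {𝕜 A : Type*} [DivisionRing 𝕜]
    [NeZero (2 : 𝕜)] [Ring A] [StarMul A] [Module 𝕜 A] {u x : A} (hu : u ∈ unitary A) :
    ((1 : 𝕜) / 2) • (u * x * star u + x) = x ↔ Commute u x := by
  rw [half_smul_add_eq_right_iff, commute_unitary_iff_star_right_conjugate hu]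

theorem exists_mem_unitary_ne_smul_one_and_commute {R A : Type*} [CommSemiring R] [Semiring A]
    [StarMul A] [Algebra R A] (hA : ∃ v ∈ unitary A, ∀ c : R, v ≠ c • (1 : A))
    {u : A} (hu : u ∈ unitary A) :
    ∃ v ∈ unitary A, (∀ c : R, v ≠ c • (1 : A)) ∧ Commute u v := by
  by_cases hscalar : ∃ c : R, u = c • (1 : A)
  · obtain ⟨c, rfl⟩ := hscalar
    obtain ⟨v, hv, hv_ne⟩ := hA
    exact ⟨v, hv, hv_ne, (Commute.one_left v).smul_left c⟩
  · exact ⟨u, hu, not_exists.mp hscalar, Commute.refl u⟩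

section Swap

variable {n R : Type*} [DecidableEq n]

theorem swap_mem_unitaryGroup [Fintype n] [CommRing R] [StarRing R] (i j : n) :
    swap R i j ∈ unitaryGroup n R := by
  rw [mem_unitaryGroup_iff, star_eq_conjTranspose, conjTranspose_swap, swap_mul_self]

theorem swap_ne_smul_one [Semiring R] [Nontrivial R] {i j : n} (hij : i ≠ j) (c : R) :
    swap R i j ≠ c • (1 : Matrix n n R) := by
  intro h
  have h_entry : (1 : R) = 0 := by
    simpa [swap, PEquiv.toMatrix_apply, hij] using congrFun₂ h i j
  exact one_ne_zero h_entry

end Swap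

theorem exists_mem_unitaryGroup_ne_smul_one (n R : Type*) [Fintype n] [DecidableEq n]
    [Nontrivial n] [CommRing R] [StarRing R] [Nontrivial R] :
    ∃ U ∈ unitaryGroup n R, ∀ c : R, U ≠ c • (1 : Matrix n n R) :=
  let ⟨i, j, hij⟩ := exists_pair_ne n
  ⟨swap R i j, swap_mem_unitaryGroup i j, swap_ne_smul_one hij⟩

theorem single_layer_insufficient_general {n 𝕜 : Type*} [Fintype n] [DecidableEq n] [Nontrivial n]
    [Field 𝕜] [StarRing 𝕜] [NeZero (2 : 𝕜)] (C : unitaryGroup n 𝕜) :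
    ∃ E : Matrix n n 𝕜,
      E ∈ unitaryGroup n 𝕜 ∧
      (∀ c : 𝕜, E ≠ c • (1 : Matrix n n 𝕜)) ∧
      ((1 : 𝕜) / 2) • ((C : Matrix n n 𝕜) * E * (C : Matrix n n 𝕜)ᴴ + E) = E := by
  obtain ⟨E, hE, hE_ne, hCE⟩ := exists_mem_unitary_ne_smul_one_and_commute
    (exists_mem_unitaryGroup_ne_smul_one n 𝕜) C.prop
  exact ⟨E, hE, hE_ne, (half_smul_unitary_conj_add_eq_self_iff_commute C.prop).mpr hCE⟩

theorem single_layer_insufficient (C : Matrix.unitaryGroup (Fin 2) ℂ) :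
    ∃ E : Matrix (Fin 2) (Fin 2) ℂ,
      E ∈ Matrix.unitaryGroup (Fin 2) ℂ ∧
      (∀ c : ℂ, E ≠ c • (1 : Matrix (Fin 2) (Fin 2) ℂ)) ∧
      ((1 : ℂ) / 2) •
          ((C : Matrix (Fin 2) (Fin 2) ℂ) * E * (C : Matrix (Fin 2) (Fin 2) ℂ)ᴴ + E) = E :=
  single_layer_insufficient_general C
end
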